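/- If K ⊂ ℝ² is a bounded symmetric convex body whose boundary contains no line segment (i.e., K is strictly convex), and S ⊂ ℝ² is well-distributed, then Δ_K(S) is not separated. -/

import Mathlib

open Set

open AffineMap Filter Metric Module

/-! Measured in a strictly convex norm on the plane, two circles with centres `x` and `y` meet at
most once on each side of the line `xy`: if `p` and `q` are two meeting points on the same side,
then the ray `xp` crosses the segment `yq` or vice versa, and the triangle inequalities through the
crossing point force `p = q`. So a point `p` of `S` on a given side is determined by its distances
to two fixed points `x, y ∈ S`. If all distances occurring in `S` were `c`-separated, then only
boundedly many pairs of distances would be available for the points at distance between `a` and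
`a + l` from `x`, uniformly in `a`. But a well-distributed set has arbitrarily many points in such
a half-annulus once `a` is large. -/

section Affine

variable {R V P : Type*} [Field R] [LinearOrder R] [IsStrictOrderedRing R] [AddCommGroup V]
  [Module R V] [AddTorsor V P]

theorem exists_wbtw_lineMap_of_sSameSide {x y p q : P} (h : line[R, x, y].SSameSide p q) :
    ∃ t : R, 0 < t ∧ (Wbtw R y (lineMap x p t) q ∨ Wbtw R y (lineMap x q t) p) := by
  obtain ⟨b, hb, z, hz, hp⟩ :
      p ∈ image2 (fun (t : R) z ↦ t • (q -ᵥ x) +ᵥ z) (Ioi 0) line[R, x, y] :=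
    AffineSubspace.setOfPred_sSameSide_eq_image2 h.right_notMem (left_mem_affineSpan_pair R x y) ▸
      AffineSubspace.sSameSide_comm.1 h
  obtain ⟨a, rfl⟩ := mem_affineSpan_pair_iff_exists_lineMap_eq.1 hz
  replace hp : b • (q -ᵥ x) +ᵥ lineMap x y a = p := hp
  replace hb : 0 < b := hb
  have hpx : p -ᵥ x = a • (y -ᵥ x) + b • (q -ᵥ x) := by
    rw [← hp, lineMap_apply, vadd_vadd, vadd_vsub, add_comm]
  rcases le_total 0 a with ha | ha
  · have hab : 0 < a + b := by positivity
    refine ⟨(a + b)⁻¹, by positivity, .inl ⟨b / (a + b), ⟨by positivity, ?_⟩, ?_⟩⟩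
    · rw [div_le_one hab]; linarith
    · apply vsub_left_cancel (p := x)
      rw [lineMap_vsub_left, hpx, lineMap_apply, vadd_vsub_assoc,
        ← vsub_sub_vsub_cancel_right q y x]
      match_scalars <;> field
  · have ha1 : 0 < 1 - a := by linarith
    refine ⟨b / (1 - a), by positivity, .inr ⟨(1 - a)⁻¹, ⟨by positivity, ?_⟩, ?_⟩⟩
    · exact inv_le_one_of_one_le₀ (by linarith)
    · apply vsub_left_cancel (p := x)
      rw [lineMap_vsub_left, lineMap_apply, vadd_vsub_assoc,
        ← vsub_sub_vsub_cancel_right p y x, hpx]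
      match_scalars <;> field

theorem sSameSide_of_direction_eq_ker {s : AffineSubspace R P} {f : V →ₗ[R] R}
    (hs : s.direction = f.ker) {x p q : P} (hx : x ∈ s) (hp : 0 < f (p -ᵥ x))
    (hq : 0 < f (q -ᵥ x)) : s.SSameSide p q := by
  have hnotMem {z : P} (hz : 0 < f (z -ᵥ x)) : z ∉ s := fun hzs ↦
    hz.ne' (LinearMap.mem_ker.1 (hs ▸ AffineSubspace.vsub_mem_direction hzs hx))
  let t := f (p -ᵥ x) / f (q -ᵥ x)
  have hdir : p -ᵥ x - t • (q -ᵥ x) ∈ s.direction := by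
    simp only [hs, LinearMap.mem_ker, map_sub, map_smul, smul_eq_mul, t]
    field_simp
    ring
  have ht : 0 < t := div_pos hp hq
  refine AffineSubspace.sSameSide_of_vsub_eq_smul (c₁ := t) (c₂ := 1) (m := q -ᵥ x)
    (AffineSubspace.vadd_mem_of_mem_direction hdir hx) hx ?_ (one_smul R _).symm
    (mul_nonneg ht.le zero_le_one) (hnotMem hp) (hnotMem hq)
  rw [vsub_vadd_eq_vsub_sub, sub_sub_cancel]

end Affine

theorem exists_ne_zero_ker_eq_span_singleton {K V : Type*} [Field K] [AddCommGroup V] [Module K V]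
    (hV : finrank K V = 2) {e : V} (he : e ≠ 0) : ∃ f : Dual K V, f ≠ 0 ∧ f.ker = K ∙ e := by
  have : FiniteDimensional K V := .of_finrank_eq_succ hV
  have hspan : finrank K (K ∙ e) = 1 := finrank_span_singleton he
  obtain ⟨f, hf, hle⟩ := (K ∙ e).exists_le_ker_of_lt_top
    (Submodule.lt_top_of_finrank_lt_finrank (by omega))
  have hker := Dual.finrank_ker_add_one_of_ne_zero hf
  exact ⟨f, hf, (Submodule.eq_of_le_of_finrank_eq hle (by omega)).symm⟩

theorem encard_inter_Icc_le_of_pairwise {D : Set ℝ} {c : ℝ} (hc : 0 < c)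
    (hD : D.Pairwise fun s t ↦ c ≤ |s - t|) (a l : ℝ) :
    (D ∩ Icc a (a + l)).encard ≤ (⌊l / c⌋₊ + 1 : ℕ) := by
  rw [← Finset.card_range (_ + 1), ← encard_coe_eq_coe_finsetCard]
  refine encard_le_encard_of_injOn (f := fun d ↦ ⌊(d - a) / c⌋₊) ?_ ?_
  · rintro d ⟨-, -, hdb⟩
    rw [Finset.mem_coe, Finset.mem_range_succ_iff]
    exact Nat.floor_le_floor (by gcongr; linarith)
  · rintro s ⟨hs, has, -⟩ t ⟨ht, hat, -⟩ hst
    replace hst : ⌊(s - a) / c⌋₊ = ⌊(t - a) / c⌋₊ := hst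
    by_contra hne
    have hfloor : ⌊(s - a) / c⌋ = ⌊(t - a) / c⌋ := by
      rw [← Int.natCast_floor_eq_floor (div_nonneg (sub_nonneg.2 has) hc.le),
        ← Int.natCast_floor_eq_floor (div_nonneg (sub_nonneg.2 hat) hc.le), hst]
    have hlt := Int.abs_sub_lt_one_of_floor_eq_floor hfloor
    rw [← sub_div, sub_sub_sub_cancel_right, abs_div, abs_of_pos hc, div_lt_one hc] at hlt
    exact (hD hs ht hne).not_gt hlt

section StrictConvexSpace

variable {V P : Type*} [NormedAddCommGroup V] [NormedSpace ℝ V] [StrictConvexSpace ℝ V]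
  [MetricSpace P] [NormedAddTorsor V P] {x y p q : P}

theorem eq_of_dist_eq_of_wbtw_lineMap {t : ℝ} (ht : 0 < t) (h : Wbtw ℝ y (lineMap x p t) q)
    (hx : dist p x = dist q x) (hy : dist p y = dist q y) : p = q := by
  set m : P := lineMap x p t
  have hmx : m -ᵥ x = t • (p -ᵥ x) := lineMap_vsub_left ..
  have hymq : dist q m + dist m y = dist q y := h.symm.dist_add_dist
  have hpmy : dist p y ≤ dist p m + dist m y := dist_triangle ..
  have hqmx : dist q x ≤ dist q m + dist m x := dist_triangle ..
  -- Chaining the triangle inequalities through `m` shows that the last one is an equality.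
  have hray : SameRay ℝ (q -ᵥ x) (m -ᵥ x) := by
    rcases le_total t 1 with ht1 | ht1
    · have hpmx : dist p m + dist m x = dist p x :=
        (wbtw_lineMap_iff.2 (.inr ⟨ht.le, ht1⟩)).symm.dist_add_dist
      have hqm : Wbtw ℝ q m x := dist_add_dist_eq_iff.1 (by linarith)
      exact hqm.symm.sameRay_vsub_left.symm
    · have hxpm : Wbtw ℝ x p m := by
        refine ⟨t⁻¹, ⟨by positivity, inv_le_one_of_one_le₀ ht1⟩, ?_⟩
        rw [lineMap_apply, hmx, inv_smul_smul₀ ht.ne', vsub_vadd]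
      have hmpx : dist m p + dist p x = dist m x := hxpm.symm.dist_add_dist
      have hmqx : dist m q + dist q x = dist m x := by
        linarith [dist_comm m p, dist_comm m q, dist_triangle m q x]
      exact (dist_add_dist_eq_iff.1 hmqx).symm.sameRay_vsub_left
  have hqp : SameRay ℝ (q -ᵥ x) (p -ᵥ x) := by
    simpa only [hmx, inv_smul_smul₀ ht.ne'] using hray.pos_smul_right (inv_pos.2 ht)
  rw [sameRay_iff_of_norm_eq] at hqp
  · exact (vsub_left_cancel hqp).symm
  · simpa only [dist_eq_norm_vsub] using hx.symm

theorem eq_of_dist_eq_of_dist_eq_of_sSameSide (h : line[ℝ, x, y].SSameSide p q)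
    (hx : dist p x = dist q x) (hy : dist p y = dist q y) : p = q := by
  obtain ⟨t, ht, hpq | hqp⟩ := exists_wbtw_lineMap_of_sSameSide h
  · exact eq_of_dist_eq_of_wbtw_lineMap ht hpq hx hy
  · exact (eq_of_dist_eq_of_wbtw_lineMap ht hqp hx.symm hy.symm).symm

theorem encard_le_of_pairwise_sSameSide {S T : Set P} {c : ℝ} (hc : 0 < c)
    (hS : (image2 dist S S).Pairwise fun s t ↦ c ≤ |s - t|) (hx : x ∈ S) (hy : y ∈ S)
    (hTS : T ⊆ S) (hside : T.Pairwise line[ℝ, x, y].SSameSide) {a l : ℝ}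
    (hT : ∀ p ∈ T, dist p x ∈ Icc a (a + l)) :
    T.encard ≤ ((⌊l / c⌋₊ + 1) * (⌊(l + 2 * dist x y) / c⌋₊ + 1) : ℕ) := by
  set D := image2 dist S S
  calc T.encard
      ≤ ((D ∩ Icc a (a + l)) ×ˢ
          (D ∩ Icc (a - dist x y) (a - dist x y + (l + 2 * dist x y)))).encard := by
        refine encard_le_encard_of_injOn (f := fun p ↦ (dist p x, dist p y)) (fun p hp ↦ ?_)
          fun p hp q hq hpq ↦ by_contra fun hne ↦ ?_
        · obtain ⟨hap, hpb⟩ := hT p hp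
          exact ⟨⟨mem_image2_of_mem (hTS hp) hx, hap, hpb⟩, mem_image2_of_mem (hTS hp) hy,
            by linarith [dist_triangle_right p x y], by linarith [dist_triangle p x y]⟩
        · obtain ⟨hpx, hpy⟩ := Prod.mk.inj hpq
          exact hne (eq_of_dist_eq_of_dist_eq_of_sSameSide (hside hp hq hne) hpx hpy)
    _ ≤ _ := by
        rw [encard_prod, Nat.cast_mul]
        gcongr <;> exact encard_inter_Icc_le_of_pairwise hc hS _ _

end StrictConvexSpace

section NormedSpace

variable {E : Type*} [NormedAddCommGroup E] [NormedSpace ℝ E]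

theorem infinite_unit_sphere_inter_pos (hE : 1 < Module.rank ℝ E) {f : StrongDual ℝ E}
    (hf : f ≠ 0) : {v ∈ sphere (0 : E) 1 | 0 < f v}.Infinite := by
  obtain ⟨w, hw⟩ : ∃ w, 0 < f w := by
    obtain ⟨w, hw⟩ := DFunLike.ne_iff.1 hf
    rcases lt_or_gt_of_ne hw with h | h
    · exact ⟨-w, by simpa using h⟩
    · exact ⟨w, h⟩
  have hw0 : 0 < ‖w‖ := norm_pos_iff.2 fun h ↦ by simp [h] at hw
  set u := ‖w‖⁻¹ • w with hu
  have hu1 : u ∈ sphere (0 : E) 1 := by simp [hu, norm_smul, hw0.ne']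
  have hfu : 0 < f u := by simpa [hu] using mul_pos (inv_pos.2 hw0) hw
  have himage : Icc (f (-u)) (f u) ⊆ f '' sphere 0 1 :=
    (isPreconnected_sphere hE 0 1).intermediate_value (by simpa using hu1) hu1
      f.continuous.continuousOn
  refine .of_image f ((Ioc_infinite hfu).mono fun a ha ↦ ?_)
  obtain ⟨v, hv, rfl⟩ := himage
    ⟨by simpa only [map_neg] using (neg_neg_of_pos hfu).le.trans ha.1.le, ha.2⟩
  exact ⟨v, ⟨hv, ha.1⟩, rfl⟩

theorem exists_finset_sphere_inter_halfspace_separated (hE : 1 < Module.rank ℝ E)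
    {f : StrongDual ℝ E} (hf : f ≠ 0) (δ ε : ℝ) (n : ℕ) :
    ∃ r, ∃ U : Finset E, U.card = n ∧ (∀ v ∈ U, ‖v‖ = r ∧ δ < f v) ∧
      (U : Set E).Pairwise fun v w ↦ ε < dist v w := by
  classical
  obtain ⟨U, hU, hUn⟩ := (infinite_unit_sphere_inter_pos hE hf).exists_subset_card_eq n
  have hdeep : ∀ᶠ r : ℝ in atTop, ∀ v ∈ U, δ < r * f v :=
    (eventually_all_finset U).2 fun v hv ↦
      (tendsto_id.atTop_mul_const (hU hv).2).eventually_gt_atTop _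
  have hsep : ∀ᶠ r : ℝ in atTop, ∀ v ∈ U, ∀ w ∈ U, v ≠ w → ε < r * dist v w := by
    simp only [eventually_all_finset, eventually_imp_distrib_left]
    exact fun v _ w _ hvw ↦
      (tendsto_id.atTop_mul_const (dist_pos.2 hvw)).eventually_gt_atTop _
  obtain ⟨r, hrdeep, hrsep, hr⟩ := (hdeep.and (hsep.and (eventually_gt_atTop 0))).exists
  refine ⟨r, U.image (r • ·), ?_, ?_, ?_⟩
  · rw [Finset.card_image_of_injective U (smul_right_injective E hr.ne'), hUn]
  · refine Finset.forall_mem_image.2 fun v hv ↦ ⟨?_, by simpa using hrdeep v hv⟩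
    rw [norm_smul, mem_sphere_zero_iff_norm.1 (hU hv).1, Real.norm_of_nonneg hr.le, mul_one]
  · rw [Finset.coe_image]
    rintro _ ⟨v, hv, rfl⟩ _ ⟨w, hw, rfl⟩ hvw
    simpa only [dist_smul₀, Real.norm_of_nonneg hr.le] using hrsep v hv w hw (ne_of_apply_ne _ hvw)

theorem exists_finset_subset_halfspace_shell (hE : 1 < Module.rank ℝ E) {S : Set E} {R : ℝ}
    (hS : ∀ v, ∃ s ∈ S, dist s v ≤ R) {f : StrongDual ℝ E} (hf : f ≠ 0) (x : E) (n : ℕ) :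
    ∃ (a : ℝ) (T : Finset E), ↑T ⊆ S ∧ T.card = n ∧
      ∀ p ∈ T, 0 < f (p - x) ∧ dist p x ∈ Icc a (a + 2 * R) := by
  classical
  choose near near_mem dist_near using fun v ↦ hS (x + v)
  obtain ⟨r, U, hUn, hU, hsep⟩ :=
    exists_finset_sphere_inter_halfspace_separated hE hf (‖f‖ * R) (2 * R) n
  have hinj : InjOn near U := fun v hv w hw hvw ↦ by_contra fun hne ↦ by
    have hdist := dist_triangle_left (x + v) (x + w) (near v)
    have hnear_w := hvw ▸ dist_near w
    rw [dist_add_left] at hdist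
    linarith [hsep hv hw hne, dist_near v]
  refine ⟨r - R, U.image near, ?_, by rw [Finset.card_image_of_injOn hinj, hUn], ?_⟩
  · rw [Finset.coe_image]
    exact image_subset_iff.2 fun v _ ↦ near_mem v
  refine Finset.forall_mem_image.2 fun v hv ↦ ⟨?_, ?_⟩
  · have hf_near : |f (near v - (x + v))| ≤ ‖f‖ * R :=
      f.le_opNorm_of_le (dist_eq_norm (near v) (x + v) ▸ dist_near v)
    have hsplit : f (near v - x) = f v + f (near v - (x + v)) := by
      rw [← map_add]; congr 1; abel
    linarith [(hU v hv).2, neg_le_of_abs_le hf_near]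
  · have hvx : dist (x + v) x = r := by rw [dist_self_add_left, (hU v hv).1]
    constructor <;> linarith [dist_near v, dist_triangle (near v) (x + v) x,
      dist_triangle_left (x + v) x (near v)]

theorem nontrivial_of_forall_exists_dist_le [Nontrivial E] {S : Set E} {R : ℝ}
    (hS : ∀ v, ∃ s ∈ S, dist s v ≤ R) : S.Nontrivial := by
  obtain ⟨s, hs, -⟩ := hS 0
  obtain ⟨v, hv⟩ := NormedSpace.exists_lt_norm ℝ E R
  obtain ⟨t, ht, htv⟩ := hS (s + v)
  refine ⟨s, hs, t, ht, ?_⟩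
  rintro rfl
  rw [dist_self_add_right] at htv
  exact htv.not_gt hv

theorem not_pairwise_le_abs_sub_image2_dist [StrictConvexSpace ℝ E] (hE : finrank ℝ E = 2)
    {S : Set E} {R : ℝ} (hS : ∀ v, ∃ s ∈ S, dist s v ≤ R) {c : ℝ} (hc : 0 < c) :
    ¬ (image2 dist S S).Pairwise fun s t ↦ c ≤ |s - t| := by
  intro hsep
  have : FiniteDimensional ℝ E := .of_finrank_eq_succ hE
  have : Nontrivial E := nontrivial_of_finrank_eq_succ hE
  have hrank : 1 < Module.rank ℝ E := by
    rw [← finrank_eq_rank, hE]; norm_num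
  obtain ⟨x, hx, y, hy, hxy⟩ := nontrivial_of_forall_exists_dist_le hS
  obtain ⟨f, hf, hker⟩ := exists_ne_zero_ker_eq_span_singleton hE (sub_ne_zero.2 hxy.symm)
  have hline : line[ℝ, x, y].direction = f.ker := by
    rw [hker, direction_affineSpan, vectorSpan_pair_rev, vsub_eq_sub]
  let N := (⌊2 * R / c⌋₊ + 1) * (⌊(2 * R + 2 * dist x y) / c⌋₊ + 1)
  obtain ⟨r, T, hTS, hTN, hT⟩ := exists_finset_subset_halfspace_shell hrank hS
    (f := f.toContinuousLinearMap) (by simpa using hf) x (N + 1)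
  have hside : (T : Set E).Pairwise line[ℝ, x, y].SSameSide := fun p hp q hq _ ↦
    sSameSide_of_direction_eq_ker hline (left_mem_affineSpan_pair ℝ x y) (hT p hp).1 (hT q hq).1
  have hcard := encard_le_of_pairwise_sSameSide hc hsep hx hy hTS hside fun p hp ↦ (hT p hp).2
  rw [encard_coe_eq_coe_finsetCard, hTN, Nat.cast_le] at hcard
  exact absurd hcard (Nat.not_succ_le_self N)

end NormedSpace

section Convex

variable {E : Type*} [AddCommGroup E] [Module ℝ E] [TopologicalSpace E] [IsTopologicalAddGroup E]
  [ContinuousConstSMul ℝ E] {K : Set E}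

theorem zero_mem_interior_of_convex_of_balanced (hK : Convex ℝ K)
    (hbal : Balanced ℝ K) (hint : (interior K).Nonempty) : 0 ∈ interior K := by
  obtain ⟨z, hz⟩ := hint
  have hneg : -z ∈ K := (balanced_iff_neg_mem hK).1 hbal (interior_subset hz)
  exact hK.openSegment_interior_self_subset_interior hz hneg
    ⟨1 / 2, 1 / 2, by norm_num, by norm_num, by norm_num, by module⟩

theorem strictConvex_closure_of_not_segment_subset_frontier (hK : Convex ℝ K)
    (hstrict : ¬ ∃ A B : E, A ≠ B ∧ segment ℝ A B ⊆ frontier K) :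
    StrictConvex ℝ (closure K) := by
  refine hK.closure.strictConvex fun A _ B _ hAB ↦ ?_
  by_contra h
  rw [not_nonempty_iff_eq_empty, sdiff_eq_empty] at h
  exact hstrict ⟨A, B, hAB, h.trans frontier_closure_subset⟩

end Convex

theorem gauge_add_ne_two {E : Type*} [AddCommGroup E] [Module ℝ E] [TopologicalSpace E]
    [IsTopologicalAddGroup E] [ContinuousSMul ℝ E] {K : Set E} (hK : Convex ℝ K)
    (h0 : 0 ∈ interior K) (hstrict : StrictConvex ℝ (closure K)) {u v : E}
    (hu : gauge K u = 1) (hv : gauge K v = 1) (huv : u ≠ v) : gauge K (u + v) ≠ 2 := by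
  have hK0 : K ∈ nhds 0 := mem_interior_iff_mem_nhds.1 h0
  have mem_closure {w : E} (hw : gauge K w = 1) : w ∈ closure K :=
    (gauge_le_one_iff_mem_closure hK hK0).1 hw.le
  have hmid : (1 / 2 : ℝ) • u + (1 / 2 : ℝ) • v ∈ interior K := by
    rw [← hK.interior_closure_eq_interior_of_nonempty_interior ⟨0, h0⟩]
    exact hstrict (mem_closure hu) (mem_closure hv) huv (by norm_num) (by norm_num) (by norm_num)
  rw [← smul_add, ← gauge_lt_one_iff_mem_interior hK hK0, gauge_smul_of_nonneg (by norm_num),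
    smul_eq_mul] at hmid
  linarith

-- `E` carries no topology here, so that the norm given by `p` cannot clash with an ambient one.
theorem not_pairwise_le_abs_sub_image2_seminorm {E : Type*} [AddCommGroup E] [Module ℝ E]
    (hE : finrank ℝ E = 2) {p : Seminorm ℝ E} (hp : ∀ v, p v = 0 → v = 0)
    (hstrict : ∀ ⦃u v⦄, p u = 1 → p v = 1 → u ≠ v → p (u + v) ≠ 2)
    {S : Set E} {R : ℝ} (hS : ∀ v, ∃ s ∈ S, p (s - v) ≤ R) {c : ℝ} (hc : 0 < c) :
    ¬ (image2 (fun x y ↦ p (x - y)) S S).Pairwise fun s t ↦ c ≤ |s - t| := by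
  let : NormedAddCommGroup E :=
    ({ p with eq_zero_of_map_eq_zero' := hp } : AddGroupNorm E).toNormedAddCommGroup
  let : NormedSpace ℝ E := { norm_smul_le := fun r v ↦ (map_smul_eq_mul p r v).le }
  have : StrictConvexSpace ℝ E := .of_norm_add_ne_two hstrict
  have hdist (x y : E) : dist x y = p (x - y) := dist_eq_norm x y
  simp only [← hdist] at hS ⊢
  exact not_pairwise_le_abs_sub_image2_dist hE hS hc

theorem stmt_19_general {E : Type*} [NormedAddCommGroup E] [NormedSpace ℝ E]
    (hE : finrank ℝ E = 2) {K : Set E} (hK : Convex ℝ K) (hbdd : Bornology.IsBounded K)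
    (hsym : K = -K) (hint : (interior K).Nonempty)
    (hstrict : ¬ ∃ A B : E, A ≠ B ∧ segment ℝ A B ⊆ frontier K)
    {S : Set E} (hWD : ∃ R, ∀ v, ∃ s ∈ S, dist s v ≤ R) :
    ¬ ∃ c > 0, ∀ x ∈ S, ∀ y ∈ S, ∀ x' ∈ S, ∀ y' ∈ S,
      gauge K (x - y) ≠ gauge K (x' - y') →
      c ≤ |gauge K (x - y) - gauge K (x' - y')| := by
  rintro ⟨c, hc, hsep⟩
  obtain ⟨R, hR⟩ := hWD
  have hbal : Balanced ℝ K := (balanced_iff_neg_mem hK).2 fun _ hx ↦ by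
    rwa [hsym, Set.neg_mem_neg]
  have h0 : 0 ∈ interior K := zero_mem_interior_of_convex_of_balanced hK hbal hint
  have hK0 : K ∈ nhds 0 := mem_interior_iff_mem_nhds.1 h0
  have habs : Absorbent ℝ K := absorbent_nhds_zero hK0
  let p := gaugeSeminorm hbal hK habs
  obtain ⟨M, hM, hpM⟩ := p.bound_of_continuous_normedSpace (continuous_gauge hK hK0)
  have hcover (v : E) : ∃ s ∈ S, p (s - v) ≤ M * R := by
    obtain ⟨s, hs, hsv⟩ := hR v
    exact ⟨s, hs, (hpM _).trans (by gcongr; rwa [← dist_eq_norm])⟩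
  have hdefinite (v : E) : p v = 0 → v = 0 :=
    (gauge_eq_zero habs ((NormedSpace.isVonNBounded_iff ℝ).2 hbdd)).1
  have hne_two ⦃u v : E⦄ : p u = 1 → p v = 1 → u ≠ v → p (u + v) ≠ 2 :=
    gauge_add_ne_two hK h0 (strictConvex_closure_of_not_segment_subset_frontier hK hstrict)
  refine not_pairwise_le_abs_sub_image2_seminorm hE hdefinite hne_two hcover hc ?_
  rintro _ ⟨x, hx, y, hy, rfl⟩ _ ⟨x', hx', y', hy', rfl⟩
  exact hsep x hx y hy x' hx' y' hy'

theorem exists_dist_le_of_forall_exists_mem_Icc {S : Set (ℝ × ℝ)} {C : ℝ}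
    (hS : ∀ a b : ℝ, ∃ s ∈ S, s.1 ∈ Icc a (a + C) ∧ s.2 ∈ Icc b (b + C)) (v : ℝ × ℝ) :
    ∃ s ∈ S, dist s v ≤ C := by
  obtain ⟨s, hs, h1, h2⟩ := hS v.1 v.2
  refine ⟨s, hs, ?_⟩
  rw [Prod.dist_eq, Real.dist_eq, Real.dist_eq, abs_of_nonneg (sub_nonneg.2 h1.1),
    abs_of_nonneg (sub_nonneg.2 h2.1)]
  exact max_le (sub_le_iff_le_add'.2 h1.2) (sub_le_iff_le_add'.2 h2.2)

/-- If `K ⊆ ℝ²` is a compact symmetric convex body whose boundary contains no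
nondegenerate line segment (i.e. `K` is strictly convex), and `S ⊆ ℝ²` is
well-distributed, then `Δ_K(S)` is not separated. -/
theorem stmt_19 (K : Set (ℝ × ℝ)) (hK : Convex ℝ K) (hcomp : IsCompact K)
    (hsym : K = -K) (hint : (interior K).Nonempty)
    (hstrict : ¬ ∃ A B : ℝ × ℝ, A ≠ B ∧ segment ℝ A B ⊆ frontier K)
    (S : Set (ℝ × ℝ))
    (hWD : ∃ C > 0, ∀ a b : ℝ, ∃ s ∈ S, s.1 ∈ Icc a (a + C) ∧ s.2 ∈ Icc b (b + C)) :
    ¬ ∃ c > 0, ∀ x ∈ S, ∀ y ∈ S, ∀ x' ∈ S, ∀ y' ∈ S,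
      gauge K (x - y) ≠ gauge K (x' - y') →
      c ≤ |gauge K (x - y) - gauge K (x' - y')| := by
  obtain ⟨C, -, hC⟩ := hWD
  have hplane : finrank ℝ (ℝ × ℝ) = 2 := by simp
  exact stmt_19_general hplane hK hcomp.isBounded hsym hint hstrict
    ⟨C, exists_dist_le_of_forall_exists_mem_Icc hC⟩
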